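/- The operators ρ^{(3)}(r^{ij}, r^{kl}, r^{mn}) = P^{ijklmn;}_{pq}{}^r z^p z^q ∂/∂z^r on ℂ[z¹,…,z⁵], where P is the 𝔰𝔩(5)-equivariant projector Λ³(Λ²L) → (2001) written out explicitly as (1/2)(z^{[i}ε^{j]klp[m}z^{n]} − z^{[i}ε^{j]mnp[k}z^{l]} + z^{[k}ε^{l]mnp[i}z^{j]} − z^{[k}ε^{l]ijp[m}z^{n]} + z^{[m}ε^{n]ijp[k}z^{l]} − z^{[m}ε^{n]klp[i}z^{j]}) ∂/∂z^p, satisfy the coherence relation [∂/∂z^i, ρ^{(3)}(r^{jk}, r^{lm}, r^{np})] = P^{jklmnp;}_i{}^r_q (z^q ∂/∂z^r-part), i.e. equal the operator ρ^{(1)} applied to μ₄(e_i, r^{jk}, r^{lm}, r^{np}) where μ₄ is the 4-bracket of the extended holomorphic symmetry algebra. -/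

import Mathlib

open scoped BigOperators
open MvPolynomial

/-- The Levi-Civita symbol `ε^{ijklm}` on five indices. -/
noncomputable def eps5 (f : Fin 5 → Fin 5) : ℂ :=
  if h : Function.Bijective f then ((Equiv.Perm.sign (Equiv.ofBijective f h) : ℤ) : ℂ) else 0

/-- `ρ^{(1)}(r̃^a_b) = z^a ∂/∂z^b − (1/5) δ^a_b z^k ∂/∂z^k`. -/
noncomputable def rho1 (a b : Fin 5) (f : MvPolynomial (Fin 5) ℂ) :
    MvPolynomial (Fin 5) ℂ :=
  X a * pderiv b f - (5 : ℂ)⁻¹ • (if a = b then ∑ k, X k * pderiv k f else 0)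

/-- The building block `z^{[i}ε^{j]klp[m}z^{n]} ∂/∂z^p` (antisymmetrized over `(i,j)` and
`(m,n)`, unnormalized). -/
noncomputable def zBlock (i j k l m n : Fin 5) (f : MvPolynomial (Fin 5) ℂ) :
    MvPolynomial (Fin 5) ℂ :=
  ∑ p, (C (eps5 ![j, k, l, p, m]) * X i * X n - C (eps5 ![i, k, l, p, m]) * X j * X n
      - C (eps5 ![j, k, l, p, n]) * X i * X m + C (eps5 ![i, k, l, p, n]) * X j * X m)
    * pderiv p f

/-- `ρ^{(3)}(r^{ij}, r^{kl}, r^{mn})` as an operator on `ℂ[z¹,…,z⁵]`. -/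
noncomputable def rho3 (i j k l m n : Fin 5) (f : MvPolynomial (Fin 5) ℂ) :
    MvPolynomial (Fin 5) ℂ :=
  (2 : ℂ)⁻¹ • (zBlock i j k l m n f - zBlock i j m n k l f + zBlock k l m n i j f
    - zBlock k l i j m n f + zBlock m n i j k l f - zBlock m n k l i j f)

/-- The building block `δ_i^{[j}ε^{k]lmqr}δ^{[n}_q ρ^{(1)}(r̃^{p]}_r)` (unnormalized
antisymmetrizations, internal indices `q, r` summed). -/
noncomputable def muBlock (i j k l m n p : Fin 5) (f : MvPolynomial (Fin 5) ℂ) :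
    MvPolynomial (Fin 5) ℂ :=
  ∑ q, ∑ r,
    ((if i = j then (1 : ℂ) else 0) * eps5 ![k, l, m, q, r]
      - (if i = k then (1 : ℂ) else 0) * eps5 ![j, l, m, q, r]) •
    ((if n = q then (1 : ℂ) else 0) • rho1 p r f - (if p = q then (1 : ℂ) else 0) • rho1 n r f)

/-- `ρ^{(1)}(μ₄(e_i, r^{jk}, r^{lm}, r^{np}))` as an operator on `ℂ[z¹,…,z⁵]`. -/
noncomputable def rho1mu4 (i j k l m n p : Fin 5) (f : MvPolynomial (Fin 5) ℂ) :
    MvPolynomial (Fin 5) ℂ :=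
  - muBlock i j k l m n p f + muBlock i j k n p l m f - muBlock i l m n p j k f
    + muBlock i l m j k n p f - muBlock i n p j k l m f + muBlock i n p l m j k f

/-!
With the constant vector fields `E^{abcd} = ε^{abcdr} ∂/∂z^r`, every block of `ρ^{(3)}` is a sum of
terms `z^i z^n E^{jklm}`. Exchanging the outer pairs of indices changes the sign of a block, so the
factor `1/2` cancels and `ρ^{(3)}` is a cyclic sum of three blocks. Since `∂/∂z^i` commutes with
`E^{abcd}`, bracketing a block with it only differentiates the quadratic coefficient, which yields
two contractions `δ_i^{[j} E^{k]lm[n} z^{p]}`, one for each end of the block. The six contractions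
so obtained are those in `μ₄`; the trace parts of the `ρ^{(1)}(r̃)` in `μ₄` cancel in pairs.
-/

lemma mkDerivation_apply_eq_sum_mul_pderiv {σ R : Type*} [Fintype σ] [CommSemiring R]
    (g : σ → MvPolynomial σ R) (f : MvPolynomial σ R) :
    mkDerivation R g f = ∑ i, g i * pderiv i f := by
  classical
  have sum_apply (h : MvPolynomial σ R) : (∑ i, g i • pderiv i) h = ∑ i, g i * pderiv i h := by
    have coe_sum := map_sum Derivation.coeFnAddMonoidHom (fun i => g i • pderiv (R := R) i) .univ
    exact (congrFun coe_sum h).trans (Finset.sum_apply _ _ _)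
  rw [← sum_apply]
  congr 1
  refine derivation_ext fun j => ?_
  simp [sum_apply, pderiv_X, Pi.single_apply]

lemma pderiv_mkDerivation_C {σ R : Type*} [CommRing R] (c : σ → R) (i : σ)
    (f : MvPolynomial σ R) :
    pderiv i (mkDerivation R (fun j => C (c j)) f) =
      mkDerivation R (fun j => C (c j)) (pderiv i f) := by
  have lie_eq_zero :
      ⁅pderiv (R := R) i, mkDerivation R fun j => (C (c j) : MvPolynomial σ R)⁆ = 0 := by
    refine derivation_ext fun j => ?_
    obtain rfl | hij := eq_or_ne i j
    · simp [Derivation.commutator_apply]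
    · simp [Derivation.commutator_apply, pderiv_X_of_ne hij.symm]
  exact sub_eq_zero.mp (DFunLike.congr_fun lie_eq_zero f)

lemma eps5_comp_perm (f : Fin 5 → Fin 5) (π : Equiv.Perm (Fin 5)) :
    eps5 (f ∘ π) = (Equiv.Perm.sign π : ℤ) * eps5 f := by
  have bijective_iff : Function.Bijective (f ∘ π) ↔ Function.Bijective f :=
    Function.Bijective.of_comp_iff f π.bijective
  by_cases hf : Function.Bijective f
  · have ofBijective_comp : Equiv.ofBijective (f ∘ π) (bijective_iff.mpr hf) =
        Equiv.ofBijective f hf * π := Equiv.ext fun _ => rfl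
    rw [eps5, eps5, dif_pos (bijective_iff.mpr hf), dif_pos hf, ofBijective_comp,
      Equiv.Perm.sign_mul]
    push_cast
    ring
  · rw [eps5, eps5, dif_neg (bijective_iff.not.mpr hf), dif_neg hf, mul_zero]

lemma eps5_comp_swap (f : Fin 5 → Fin 5) {x y : Fin 5} (hxy : x ≠ y) :
    eps5 (f ∘ Equiv.swap x y) = -eps5 f := by
  simp [eps5_comp_perm, Equiv.Perm.sign_swap hxy]

lemma eps5_swap_last (a b c d e : Fin 5) : eps5 ![a, b, c, e, d] = -eps5 ![a, b, c, d, e] := by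
  rw [← eps5_comp_swap _ (show (3 : Fin 5) ≠ 4 by decide)]
  congr 1
  ext x
  fin_cases x <;> rfl

lemma eps5_swap_outer (a b c d e : Fin 5) : eps5 ![d, b, c, a, e] = -eps5 ![a, b, c, d, e] := by
  rw [← eps5_comp_swap _ (show (0 : Fin 5) ≠ 3 by decide)]
  congr 1
  ext x
  fin_cases x <;> rfl

lemma eps5_swap_pairs (a b c d e : Fin 5) : eps5 ![a, d, e, b, c] = eps5 ![a, b, c, d, e] := by
  rw [← neg_neg (eps5 ![a, b, c, d, e]), ← eps5_comp_swap _ (show (1 : Fin 5) ≠ 3 by decide),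
    ← eps5_comp_swap _ (show (2 : Fin 5) ≠ 4 by decide)]
  congr 1
  ext x
  fin_cases x <;> rfl

/-- The constant vector field `E^{abcd} = ε^{abcdr} ∂/∂z^r`, as a derivation. -/
noncomputable def epsField (a b c d : Fin 5) :
    Derivation ℂ (MvPolynomial (Fin 5) ℂ) (MvPolynomial (Fin 5) ℂ) :=
  mkDerivation ℂ fun r => C (eps5 ![a, b, c, d, r])

lemma epsField_apply (a b c d : Fin 5) (f : MvPolynomial (Fin 5) ℂ) :
    epsField a b c d f = ∑ r, C (eps5 ![a, b, c, d, r]) * pderiv r f :=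
  mkDerivation_apply_eq_sum_mul_pderiv _ f

lemma epsField_swap_outer (a b c d : Fin 5) : epsField d b c a = -epsField a b c d :=
  derivation_ext fun r => by simp [epsField, eps5_swap_outer a b c d]

lemma pderiv_epsField (i a b c d : Fin 5) (f : MvPolynomial (Fin 5) ℂ) :
    pderiv i (epsField a b c d f) = epsField a b c d (pderiv i f) :=
  pderiv_mkDerivation_C _ i f

/-- The linear vector field `E^{abc[d} z^{e]}` (unnormalized antisymmetrization), as a
derivation. -/
noncomputable def epsLinearField (a b c d e : Fin 5) :
    Derivation ℂ (MvPolynomial (Fin 5) ℂ) (MvPolynomial (Fin 5) ℂ) :=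
  (X e : MvPolynomial (Fin 5) ℂ) • epsField a b c d -
    (X d : MvPolynomial (Fin 5) ℂ) • epsField a b c e

lemma epsLinearField_apply (a b c d e : Fin 5) (f : MvPolynomial (Fin 5) ℂ) :
    epsLinearField a b c d e f = X e * epsField a b c d f - X d * epsField a b c e f :=
  rfl

/-- The contraction `δ_i^{[j} E^{k]lm[n} z^{p]}` of `μ₄` with the trace parts of `ρ^{(1)}`
left out. -/
noncomputable def muContraction (i j k l m n p : Fin 5) :
    Derivation ℂ (MvPolynomial (Fin 5) ℂ) (MvPolynomial (Fin 5) ℂ) :=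
  (if i = j then (1 : ℂ) else 0) • epsLinearField k l m n p -
    (if i = k then (1 : ℂ) else 0) • epsLinearField j l m n p

/-- The contribution `(2/5) δ_i^{[j} ε^{k]lmnp} z^s ∂/∂z^s` to `muBlock` of the trace parts of
`ρ^{(1)}`. -/
noncomputable def muTrace (i j k l m n p : Fin 5) :
    Derivation ℂ (MvPolynomial (Fin 5) ℂ) (MvPolynomial (Fin 5) ℂ) :=
  (2 / 5 * ((if i = j then (1 : ℂ) else 0) * eps5 ![k, l, m, n, p] -
    (if i = k then (1 : ℂ) else 0) * eps5 ![j, l, m, n, p])) • mkDerivation ℂ X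

lemma muTrace_swap_pairs (i j k l m n p : Fin 5) :
    muTrace i j k n p l m = muTrace i j k l m n p := by
  simp only [muTrace, eps5_swap_pairs _ l m n p]

lemma zBlock_eq (i j k l m n : Fin 5) (f : MvPolynomial (Fin 5) ℂ) :
    zBlock i j k l m n f =
      X j * epsLinearField i k l m n f - X i * epsLinearField j k l m n f := by
  simp only [zBlock, epsLinearField_apply, epsField_apply, Finset.mul_sum,
    ← Finset.sum_sub_distrib]
  refine Finset.sum_congr rfl fun r _ => ?_
  simp only [fun a d => eps5_swap_last a k l d r, C_neg]
  ring

lemma zBlock_swap_outer_pairs (i j k l m n : Fin 5) (f : MvPolynomial (Fin 5) ℂ) :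
    zBlock m n k l i j f = -zBlock i j k l m n f := by
  have swap_outer (a b : Fin 5) : epsField a k l b f = -epsField b k l a f := by
    rw [epsField_swap_outer b k l a, Derivation.neg_apply]
  simp only [zBlock_eq, epsLinearField_apply, swap_outer m, swap_outer n]
  ring

lemma rho3_eq_cyclic_sum (i j k l m n : Fin 5) (f : MvPolynomial (Fin 5) ℂ) :
    rho3 i j k l m n f = zBlock i j k l m n f + zBlock k l m n i j f + zBlock m n i j k l f := by
  rw [rho3, zBlock_swap_outer_pairs k l m n i j, zBlock_swap_outer_pairs m n i j k l,
    zBlock_swap_outer_pairs i j k l m n]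
  module

lemma pderiv_zBlock_sub_zBlock_pderiv (i j k l m n p : Fin 5) (f : MvPolynomial (Fin 5) ℂ) :
    pderiv i (zBlock j k l m n p f) - zBlock j k l m n p (pderiv i f) =
      muContraction i n p l m j k f - muContraction i j k l m n p f := by
  have swap_outer (a b : Fin 5) : epsField a l m b f = -epsField b l m a f := by
    rw [epsField_swap_outer b l m a, Derivation.neg_apply]
  have pderiv_X_eq_ite (s : Fin 5) :
      pderiv i (X s : MvPolynomial (Fin 5) ℂ) = C (if i = s then 1 else 0) := by
    simp [pderiv_X, Pi.single_apply, eq_comm, apply_ite C]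
  simp only [zBlock_eq, muContraction, epsLinearField_apply, map_sub, pderiv_mul,
    pderiv_epsField, pderiv_X_eq_ite, Derivation.sub_apply, Derivation.smul_apply,
    smul_eq_C_mul, swap_outer n, swap_outer p]
  ring

lemma sum_smul_rho1 (c : Fin 5 → ℂ) (p : Fin 5) (f : MvPolynomial (Fin 5) ℂ) :
    ∑ r, c r • rho1 p r f =
      X p * mkDerivation ℂ (fun r => C (c r)) f - (c p / 5) • mkDerivation ℂ X f := by
  simp [rho1, smul_sub, Finset.mul_sum, mkDerivation_apply_eq_sum_mul_pderiv, ← smul_eq_C_mul,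
    smul_smul, div_eq_mul_inv]

lemma sum_eps5_smul_rho1_antisymm (a b c n p : Fin 5) (f : MvPolynomial (Fin 5) ℂ) :
    ∑ r, eps5 ![a, b, c, n, r] • rho1 p r f - ∑ r, eps5 ![a, b, c, p, r] • rho1 n r f =
      epsLinearField a b c n p f - (2 / 5 * eps5 ![a, b, c, n, p]) • mkDerivation ℂ X f := by
  rw [sum_smul_rho1, sum_smul_rho1, eps5_swap_last a b c n p, epsLinearField_apply, epsField,
    epsField]
  module

lemma muBlock_eq_sub_muTrace (i j k l m n p : Fin 5) (f : MvPolynomial (Fin 5) ℂ) :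
    muBlock i j k l m n p f = muContraction i j k l m n p f - muTrace i j k l m n p f := by
  have contract_deltas : muBlock i j k l m n p f =
      (if i = j then (1 : ℂ) else 0) • (∑ r, eps5 ![k, l, m, n, r] • rho1 p r f -
        ∑ r, eps5 ![k, l, m, p, r] • rho1 n r f) -
      (if i = k then (1 : ℂ) else 0) • (∑ r, eps5 ![j, l, m, n, r] • rho1 p r f -
        ∑ r, eps5 ![j, l, m, p, r] • rho1 n r f) := by
    rw [muBlock, Finset.sum_comm]
    simp only [ite_mul, one_mul, zero_mul, ite_smul, one_smul, zero_smul, smul_sub, smul_ite,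
      sub_smul, smul_zero, Finset.sum_sub_distrib, Finset.sum_ite_eq, Finset.mem_univ, ↓reduceIte,
      Finset.sum_ite_irrel, Finset.sum_const_zero]
    abel
  rw [contract_deltas, sum_eps5_smul_rho1_antisymm, sum_eps5_smul_rho1_antisymm]
  simp only [muContraction, muTrace, Derivation.sub_apply, Derivation.smul_apply]
  module

lemma rho1mu4_eq_sum_muContraction (i j k l m n p : Fin 5) (f : MvPolynomial (Fin 5) ℂ) :
    rho1mu4 i j k l m n p f =
      -muContraction i j k l m n p f + muContraction i j k n p l m f -
        muContraction i l m n p j k f + muContraction i l m j k n p f -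
        muContraction i n p j k l m f + muContraction i n p l m j k f := by
  simp only [rho1mu4, muBlock_eq_sub_muTrace]
  rw [muTrace_swap_pairs i j k l m n p, muTrace_swap_pairs i l m j k n p,
    muTrace_swap_pairs i n p j k l m]
  abel

/-- The operators `ρ^{(3)}` satisfy the coherence relation
`[∂/∂z^i, ρ^{(3)}(r^{jk}, r^{lm}, r^{np})] = ρ^{(1)}(μ₄(e_i, r^{jk}, r^{lm}, r^{np}))`. -/
theorem rho3_coherence_with_mu4 :
    ∀ (i j k l m n p : Fin 5) (f : MvPolynomial (Fin 5) ℂ),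
      pderiv i (rho3 j k l m n p f) - rho3 j k l m n p (pderiv i f) =
        rho1mu4 i j k l m n p f := by
  intro i j k l m n p f
  rw [rho3_eq_cyclic_sum, rho3_eq_cyclic_sum, map_add, map_add, rho1mu4_eq_sum_muContraction]
  linear_combination pderiv_zBlock_sub_zBlock_pderiv i j k l m n p f +
    pderiv_zBlock_sub_zBlock_pderiv i l m n p j k f +
    pderiv_zBlock_sub_zBlock_pderiv i n p j k l m f
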